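/- Assume the explicit abc conjecture: for all pairwise coprime positive integers a, b, c with a + b = c one has c < rad(a·b·c)^{7/4}. Let m ≥ 1 and 0 ≤ j₂ < j₁ be integers, and set d = gcd(m + j₁, j₁ − j₂). Then m/d ≤ (rad(m + j₁) · rad(m + j₂) · (j₁ − j₂)/d)^{7/4}. -/

import Mathlib

/-- The radical of a natural number: the product of its distinct prime factors. -/
def rad (n : ℕ) : ℕ := n.primeFactors.prod id

/-- The explicit abc conjecture (Baker / Laishram–Shorey form): for pairwise coprime
positive integers `a`, `b`, `c` with `a + b = c` one has `c < rad (a*b*c) ^ (7/4)`. -/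
def ExplicitABC : Prop :=
  ∀ a b c : ℕ, 0 < a → 0 < b → 0 < c →
    Nat.Coprime a b → Nat.Coprime a c → Nat.Coprime b c → a + b = c →
    (c : ℝ) < (rad (a * b * c) : ℝ) ^ ((7 : ℝ) / 4)

/-!
Dividing `x + y` through by `d = gcd (x, y)` gives a coprime triple to which abc applies. Its
radical is bounded factor by factor: `x / d` and `(x + y) / d` by the radicals of `x` and `x + y`,
but `y / d` by itself, which retains the factor `1 / d`. The theorem is the case `x = m + j₂`,
`y = j₁ - j₂`.
-/

open UniqueFactorizationMonoid (radical radical_dvd_radical radical_mul_dvd)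

theorem rad_eq_radical (n : ℕ) : rad n = radical n :=
  Nat.radical_eq_prod_primeFactors.symm

theorem rad_le_self {n : ℕ} (hn : n ≠ 0) : rad n ≤ n := by
  rw [rad_eq_radical]
  exact Nat.radical_le_self_iff.mpr hn

theorem rad_le_rad_of_dvd {a b : ℕ} (hab : a ∣ b) (hb : b ≠ 0) : rad a ≤ rad b := by
  simp only [rad_eq_radical]
  exact Nat.le_of_dvd (Nat.radical_pos b) (radical_dvd_radical hab hb)

theorem rad_mul_le (a b : ℕ) : rad (a * b) ≤ rad a * rad b := by
  simp only [rad_eq_radical]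
  exact Nat.le_of_dvd (Nat.mul_pos (Nat.radical_pos a) (Nat.radical_pos b)) radical_mul_dvd

theorem rad_mul_mul_le_of_dvd {a b c x z : ℕ} (hax : a ∣ x) (hx : x ≠ 0) (hb : b ≠ 0)
    (hcz : c ∣ z) (hz : z ≠ 0) : rad (a * b * c) ≤ rad x * b * rad z :=
  calc
    rad (a * b * c) ≤ rad (a * b) * rad c := rad_mul_le _ _
    _ ≤ rad a * rad b * rad c := by gcongr; exact rad_mul_le _ _
    _ ≤ rad x * b * rad z := by
      gcongr
      · exact rad_le_rad_of_dvd hax hx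
      · exact rad_le_self hb
      · exact rad_le_rad_of_dvd hcz hz

namespace ExplicitABC

theorem add_lt (habc : ExplicitABC) {a b : ℕ} (ha : 0 < a) (hb : 0 < b) (hab : a.Coprime b) :
    ((a + b : ℕ) : ℝ) < (rad (a * b * (a + b)) : ℝ) ^ ((7 : ℝ) / 4) :=
  habc a b (a + b) ha hb (by omega) hab (Nat.coprime_self_add_right.mpr hab)
    (Nat.coprime_add_self_right.mpr hab.symm) rfl

theorem add_div_gcd_lt (habc : ExplicitABC) {x y : ℕ} (hx : 0 < x) (hy : 0 < y) :
    ((x + y : ℕ) : ℝ) / x.gcd y <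
      ((rad (x + y) : ℝ) * (rad x : ℝ) * ((y : ℝ) / x.gcd y)) ^ ((7 : ℝ) / 4) := by
  have hd : 0 < x.gcd y := Nat.gcd_pos_of_pos_left y hx
  obtain ⟨a, b, hab, hxa, hyb⟩ := Nat.exists_coprime x y
  generalize x.gcd y = d at *
  subst hxa hyb
  have ha : 0 < a := Nat.pos_of_mul_pos_right hx
  have hb : 0 < b := Nat.pos_of_mul_pos_right hy
  rw [← Nat.add_mul]
  have hrad : rad (a * b * (a + b)) ≤ rad ((a + b) * d) * rad (a * d) * b :=
    calc
      rad (a * b * (a + b)) ≤ rad (a * d) * b * rad ((a + b) * d) :=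
        rad_mul_mul_le_of_dvd (Nat.dvd_mul_right a d) hx.ne' hb.ne'
          (Nat.dvd_mul_right (a + b) d) (by positivity)
      _ = rad ((a + b) * d) * rad (a * d) * b := by ring
  have hdR : (d : ℝ) ≠ 0 := by exact_mod_cast hd.ne'
  simp only [Nat.cast_mul, mul_div_cancel_right₀ _ hdR]
  calc
    ((a + b : ℕ) : ℝ) < (rad (a * b * (a + b)) : ℝ) ^ ((7 : ℝ) / 4) := habc.add_lt ha hb hab
    _ ≤ ((rad ((a + b) * d) : ℝ) * rad (a * d) * b) ^ ((7 : ℝ) / 4) := by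
      gcongr
      exact_mod_cast hrad

end ExplicitABC

/-- Central application of the explicit abc conjecture: for `m ≥ 1`, `0 ≤ j₂ < j₁` and
`d = gcd (m + j₁, j₁ - j₂)`, one has
`m / d ≤ (rad (m + j₁) · rad (m + j₂) · (j₁ - j₂) / d) ^ (7/4)`. -/
theorem abc_application_to_radicals
    (habc : ExplicitABC) (m j₁ j₂ : ℕ) (hm : 1 ≤ m) (hj : j₂ < j₁)
    (d : ℕ) (hd : d = Nat.gcd (m + j₁) (j₁ - j₂)) :
    (m : ℝ) / d ≤
      ((rad (m + j₁) : ℝ) * (rad (m + j₂) : ℝ) * (((j₁ - j₂ : ℕ) : ℝ) / d))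
        ^ ((7 : ℝ) / 4) := by
  have hsum : m + j₂ + (j₁ - j₂) = m + j₁ := by omega
  have hgcd : (m + j₂).gcd (j₁ - j₂) = d := by
    rw [hd, ← hsum, Nat.gcd_add_self_left]
  have hlt := habc.add_div_gcd_lt (x := m + j₂) (y := j₁ - j₂) (by omega) (by omega)
  rw [hsum, hgcd] at hlt
  calc
    (m : ℝ) / d ≤ ((m + j₁ : ℕ) : ℝ) / d := by gcongr; exact Nat.le_add_right m j₁
    _ ≤ _ := hlt.le
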